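/- Let n ≥ 1, 1 ≤ p < ∞, and 0 < α < n. There exists a function V ∈ L^p_loc(ℝ^n) such that V belongs to the bounded Stummel modulus class \tilde{S}_{p,α}(ℝ^n) but V ∉ S_{p,α}(ℝ^n); in fact, with x_k := (2^{−k},0,…,0) and V_k := 8^{αk} χ_{B(x_k,8^{−k})}, the function V := ( Σ_{k≥3} V_k )^{1/p} satisfies η_{p,α}V(r) < ∞ for all r > 0 while η_{p,α}V(r)^p ≥ c(n)/α for all r > 0 (where c(n) = |B(0,1)|). Hence the inclusion S_{p,α} ⊆ \tilde{S}_{p,α} is proper. -/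

import Mathlib

/-! Write `a k = 2^{-(k+3)}`, so that the bumps composing `V^p` have height `(a k ^ 3) ^ (-α)` on
the balls of radius `a k ^ 3` about points at distance `a k` from the origin along an axis. The
balls `B(x k, a k / 4)` are pairwise disjoint (`centre_separation`), hence so are the supports of
the bumps, and `V^p` is the extended nonnegative sum `bumpSum`.

*Lower bound.* In polar coordinates `∫_{B(x, δ)} |x - y|^{α - n} dy = (n / α) |B(0, 1)| δ^α`
(`lintegral_rieszKernel_ball`), so a single bump seen from its own centre contributes exactly
`(n / α) |B(0, 1)|`, however small it is. For every `r > 0` the bump `k` is contained in `B(x k, r)` once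
`k` is large, so the modulus does not tend to `0`.

*Finiteness.* For fixed `x`, at most one `k` satisfies `|x - x k| < a k / 4`; that bump contributes
at most a constant independent of `k` (`lintegral_rieszKernel_ball_le`). Every other bump stays at
distance at least `a k / 8` from `x`, and the bound `lintegral_rieszKernel_le_of_far` sums to a
geometric series of ratio `4^{-(n-α)}`, uniformly in `x` (`exists_potential_bound`). -/

open MeasureTheory Metric Filter Set ENNReal

noncomputable section

/-- Euclidean space ℝ^n. -/
abbrev Euc (n : ℕ) := EuclideanSpace ℝ (Fin n)

/-- Stummel p-modulus with general weight Ψ: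
`η_{p,Ψ}f(r) = sup_x ( ∫_{|x-y|<r} |f(y)|^p Ψ(|x-y|)/|x-y|^n dy )^{1/p}`. -/
noncomputable def stummelMod (n : ℕ) (p : ℝ) (Ψ : ℝ → ℝ) (f : Euc n → ℝ) (r : ℝ) : ℝ≥0∞ :=
  ⨆ x : Euc n,
    (∫⁻ y in ball x r,
        ENNReal.ofReal (|f y| ^ p * Ψ (dist x y) / dist x y ^ (n : ℝ))) ^ (1 / p)

/-- Stummel p-modulus with power weight Ψ(t) = t^α:
`η_{p,α}f(r) = sup_x ( ∫_{|x-y|<r} |f(y)|^p / |x-y|^{n-α} dy )^{1/p}`. -/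
noncomputable def stummelModA (n : ℕ) (p α : ℝ) (f : Euc n → ℝ) (r : ℝ) : ℝ≥0∞ :=
  ⨆ x : Euc n,
    (∫⁻ y in ball x r,
        ENNReal.ofReal (|f y| ^ p / dist x y ^ ((n : ℝ) - α))) ^ (1 / p)

/-- f ∈ L^p_loc(ℝ^n). -/
def MemLocLp (n : ℕ) (p : ℝ) (f : Euc n → ℝ) : Prop :=
  LocallyIntegrable (fun y => |f y| ^ p) volume

/-- The generalized Stummel p-class `S_{p,Ψ}`. -/
def MemStummel (n : ℕ) (p : ℝ) (Ψ : ℝ → ℝ) (f : Euc n → ℝ) : Prop :=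
  MemLocLp n p f ∧ (∀ r > 0, stummelMod n p Ψ f r < ⊤) ∧
    Tendsto (stummelMod n p Ψ f) (nhdsWithin 0 (Ioi 0)) (nhds 0)

/-- The Stummel p-class `S_{p,α}` (power weight). -/
def MemStummelA (n : ℕ) (p α : ℝ) (f : Euc n → ℝ) : Prop :=
  MemLocLp n p f ∧ (∀ r > 0, stummelModA n p α f r < ⊤) ∧
    Tendsto (stummelModA n p α f) (nhdsWithin 0 (Ioi 0)) (nhds 0)

/-- The bounded Stummel modulus class `S̃_{p,α}`. -/
def MemStummelBddA (n : ℕ) (p α : ℝ) (f : Euc n → ℝ) : Prop :=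
  MemLocLp n p f ∧ ∀ r > 0, stummelModA n p α f r < ⊤

/-- Generalized Morrey norm `‖f‖_{L^{p,Ψ}}`. -/
noncomputable def morreyNorm (n : ℕ) (p : ℝ) (Ψ : ℝ → ℝ) (f : Euc n → ℝ) : ℝ≥0∞ :=
  ⨆ (x : Euc n) (r : ℝ) (_ : 0 < r),
    (volume (ball x r))⁻¹ ^ (1 / p) * ENNReal.ofReal (Ψ r)⁻¹ *
      (∫⁻ y in ball x r, ENNReal.ofReal (|f y| ^ p)) ^ (1 / p)

/-- The generalized Morrey space `L^{p,Ψ}`. -/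
def MemMorrey (n : ℕ) (p : ℝ) (Ψ : ℝ → ℝ) (f : Euc n → ℝ) : Prop :=
  MemLocLp n p f ∧ morreyNorm n p Ψ f < ⊤

/-- Classical Morrey norm `‖f‖_{L^{p,λ}}`. -/
noncomputable def morreyNormC (n : ℕ) (p lam : ℝ) (f : Euc n → ℝ) : ℝ≥0∞ :=
  ⨆ (x : Euc n) (r : ℝ) (_ : 0 < r),
    ENNReal.ofReal (r ^ (-(lam / p))) *
      (∫⁻ y in ball x r, ENNReal.ofReal (|f y| ^ p)) ^ (1 / p)

/-- The classical Morrey space `L^{p,λ}`. -/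
def MemMorreyC (n : ℕ) (p lam : ℝ) (f : Euc n → ℝ) : Prop :=
  MemLocLp n p f ∧ morreyNormC n p lam f < ⊤

/-- Generalized weak Morrey norm `‖f‖_{wL^{p,Ψ}}`. -/
noncomputable def weakMorreyNorm (n : ℕ) (p : ℝ) (Ψ : ℝ → ℝ) (f : Euc n → ℝ) : ℝ≥0∞ :=
  ⨆ (x : Euc n) (r : ℝ) (_ : 0 < r) (t : ℝ) (_ : 0 < t),
    ENNReal.ofReal t * (volume {y ∈ ball x r | t < |f y|}) ^ (1 / p) /
      (ENNReal.ofReal (Ψ r) * (volume (ball x r)) ^ (1 / p))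

/-- The generalized weak Morrey space `wL^{p,Ψ}`. -/
def MemWeakMorrey (n : ℕ) (p : ℝ) (Ψ : ℝ → ℝ) (f : Euc n → ℝ) : Prop :=
  Measurable f ∧ weakMorreyNorm n p Ψ f < ⊤

/-- Classical weak Morrey norm `‖f‖_{wL^{p,λ}}`. -/
noncomputable def weakMorreyNormC (n : ℕ) (p lam : ℝ) (f : Euc n → ℝ) : ℝ≥0∞ :=
  ⨆ (x : Euc n) (r : ℝ) (_ : 0 < r) (t : ℝ) (_ : 0 < t),
    ENNReal.ofReal (r ^ (-(lam / p))) * ENNReal.ofReal t *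
      (volume {y ∈ ball x r | t < |f y|}) ^ (1 / p)

/-- The classical weak Morrey space `wL^{p,λ}`. -/
def MemWeakMorreyC (n : ℕ) (p lam : ℝ) (f : Euc n → ℝ) : Prop :=
  Measurable f ∧ weakMorreyNormC n p lam f < ⊤

/-- Decreasing rearrangement `f*(t) = inf{σ > 0 : |{|f| > σ}| ≤ t}`. -/
noncomputable def rearrangement (n : ℕ) (f : Euc n → ℝ) (t : ℝ) : ℝ :=
  sInf {σ : ℝ | 0 < σ ∧ volume {x : Euc n | σ < |f x|} ≤ ENNReal.ofReal t}

/-- Lorentz norm `‖f‖_{L^p_κ} = ( ∫₀^∞ (t^{1/κ} f*(t))^p dt/t )^{1/p}`. -/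
noncomputable def lorentzNorm (n : ℕ) (kappa p : ℝ) (f : Euc n → ℝ) : ℝ≥0∞ :=
  (∫⁻ t in Ioi (0 : ℝ),
      ENNReal.ofReal ((t ^ (1 / kappa) * rearrangement n f t) ^ p / t)) ^ (1 / p)

/-- The Lorentz space `L^p_κ`. -/
def MemLorentz (n : ℕ) (kappa p : ℝ) (f : Euc n → ℝ) : Prop :=
  Measurable f ∧ lorentzNorm n kappa p f < ⊤

end

/-! ### Potentials of balls -/

lemma lintegral_rieszKernel_ball (n : ℕ) (hn : 0 < n) (α : ℝ) (hα : 0 < α) (x : Euc n) (δ : ℝ)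
    (hδ : 0 < δ) :
    ∫⁻ y in ball x δ, ENNReal.ofReal ((dist x y ^ ((n : ℝ) - α))⁻¹) =
      ENNReal.ofReal (n / α * δ ^ α) * volume (ball (0 : Euc n) 1) := by
  have : Nonempty (Fin n) := ⟨⟨0, hn⟩⟩
  have hdim : Module.finrank ℝ (Euc n) = n := by simp
  set f : ℝ → ℝ := (Iio δ).indicator (fun t => (t ^ ((n : ℝ) - α))⁻¹) with hf
  have hf0 : ∀ y : Euc n, 0 ≤ f ‖y‖ := fun y =>
    indicator_apply_nonneg fun _ => inv_nonneg.2 (Real.rpow_nonneg (norm_nonneg y) _)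
  -- In polar coordinates the Jacobian `t ^ (n - 1)` turns the kernel into `t ^ (α - 1)`.
  have hpol : EqOn (fun t : ℝ => t ^ (Module.finrank ℝ (Euc n) - 1) • f t)
      ((Ioo 0 δ).indicator fun t => t ^ (α - 1)) (Ioi 0) := by
    intro t (ht : 0 < t)
    by_cases htδ : t < δ
    · simp only [hf, hdim, smul_eq_mul, indicator, mem_Iio, mem_Ioo, ht, htδ, true_and, if_true]
      rw [← Real.rpow_natCast, ← Real.rpow_neg ht.le, ← Real.rpow_add ht, Nat.cast_pred hn]
      congr 1
      ring
    · simp [hf, htδ]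
  have hii : IntegrableOn (fun t : ℝ => t ^ (α - 1)) (Ioo 0 δ) :=
    (intervalIntegral.integrableOn_Ioo_rpow_iff hδ).2 (by linarith)
  have hint : Integrable (fun y : Euc n => f ‖y‖) volume := by
    rw [integrable_fun_norm_addHaar volume, integrableOn_congr_fun hpol measurableSet_Ioi]
    exact (hii.integrable_indicator measurableSet_Ioo).integrableOn
  have hval : ∫ y : Euc n, f ‖y‖ = n / α * δ ^ α * volume.real (ball (0 : Euc n) 1) := by
    rw [integral_fun_norm_addHaar volume, setIntegral_congr_fun measurableSet_Ioi hpol,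
      setIntegral_indicator measurableSet_Ioo,
      inter_eq_right.2 (Ioo_subset_Ioi_self : Ioo 0 δ ⊆ Ioi 0), ← integral_Ioc_eq_integral_Ioo,
      ← intervalIntegral.integral_of_le hδ.le, integral_rpow (Or.inl (by linarith)), hdim]
    simp only [sub_add_cancel, Real.zero_rpow hα.ne', sub_zero, nsmul_eq_mul, smul_eq_mul]
    ring
  have h1 : ∫⁻ y in ball x δ, ENNReal.ofReal ((dist x y ^ ((n : ℝ) - α))⁻¹) =
      ∫⁻ y : Euc n, ENNReal.ofReal (f ‖y‖) := by
    rw [← lintegral_sub_left_eq_self (fun y : Euc n => ENNReal.ofReal (f ‖y‖)) x,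
      ← lintegral_indicator measurableSet_ball]
    refine lintegral_congr fun y => ?_
    by_cases hy : dist x y < δ
    · have : y ∈ ball x δ := by rwa [mem_ball, dist_comm]
      rw [indicator_of_mem this, hf, indicator_of_mem (by rwa [← dist_eq_norm]), dist_eq_norm]
    · have : y ∉ ball x δ := by rwa [mem_ball, dist_comm]
      rw [indicator_of_notMem this, hf, indicator_of_notMem (by rwa [← dist_eq_norm]), ofReal_zero]
  rw [h1, ← ofReal_integral_eq_lintegral_ofReal hint (.of_forall hf0), hval,
    ENNReal.ofReal_mul (by positivity), ofReal_measureReal measure_ball_lt_top.ne]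

lemma lintegral_rieszKernel_le_of_far (n : ℕ) (α : ℝ) (hαn : α < n) (x z : Euc n) (δ s : ℝ)
    (hδ : 0 < δ) (hs : 0 < s) (A : Set (Euc n)) (hA : A ⊆ ball z δ)
    (hfar : ∀ y ∈ A, s ≤ dist x y) :
    ∫⁻ y in A, ENNReal.ofReal ((dist x y ^ ((n : ℝ) - α))⁻¹) ≤
      ENNReal.ofReal ((s ^ ((n : ℝ) - α))⁻¹ * δ ^ n) * volume (ball (0 : Euc n) 1) := by
  calc _ ≤ ∫⁻ y in A, ENNReal.ofReal ((s ^ ((n : ℝ) - α))⁻¹) := by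
        refine setLIntegral_mono measurable_const fun y hy => ENNReal.ofReal_le_ofReal ?_
        have := hfar y hy
        gcongr
    _ = ENNReal.ofReal ((s ^ ((n : ℝ) - α))⁻¹) * volume A := by simp
    _ ≤ ENNReal.ofReal ((s ^ ((n : ℝ) - α))⁻¹) * volume (ball z δ) := by gcongr
    _ = _ := by
        rw [Measure.addHaar_ball_of_pos volume z hδ, ENNReal.ofReal_mul (by positivity), mul_assoc]
        simp

/-- The potential of a ball is bounded uniformly in the position of `x`: near `x` it is computed
exactly, and off `B(x, δ)` the kernel is at most `δ^{α-n}`. -/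
lemma lintegral_rieszKernel_ball_le (n : ℕ) (hn : 0 < n) (α : ℝ) (hα : 0 < α) (hαn : α < n)
    (x z : Euc n) (δ : ℝ) (hδ : 0 < δ) :
    ∫⁻ y in ball z δ, ENNReal.ofReal ((dist x y ^ ((n : ℝ) - α))⁻¹) ≤
      ENNReal.ofReal ((n / α + 1) * δ ^ α) * volume (ball (0 : Euc n) 1) := by
  have hsub : ball z δ ⊆ ball x δ ∪ (ball z δ \ ball x δ) := by
    rw [union_sdiff_self]; exact subset_union_right
  have hfar := lintegral_rieszKernel_le_of_far n α hαn x z δ δ hδ hδ (ball z δ \ ball x δ)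
    sdiff_subset
    (fun y hy => by have := hy.2; rw [mem_ball, dist_comm] at this; linarith)
  have hpow : (δ ^ ((n : ℝ) - α))⁻¹ * δ ^ n = δ ^ α := by
    rw [← Real.rpow_neg hδ.le, ← Real.rpow_natCast, ← Real.rpow_add hδ]
    congr 1; ring
  rw [hpow] at hfar
  calc _ ≤ _ := lintegral_mono_set hsub
    _ ≤ _ := lintegral_union_le _ _ _
    _ ≤ _ := add_le_add (lintegral_rieszKernel_ball n hn α hα x δ hδ).le hfar
    _ = _ := by
        rw [← add_mul, ← ENNReal.ofReal_add (by positivity) (by positivity)]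
        congr 2; ring

/-! ### Separation of the centres and summation -/

lemma scale_le_eighth (a : ℕ → ℝ) (haf : ∀ k, a k = 1 / 8 * (1 / 2) ^ k) (k : ℕ) :
    a k ≤ 1 / 8 := by
  rw [haf]
  have : ((1 : ℝ) / 2) ^ k ≤ 1 := pow_le_one₀ (by norm_num) (by norm_num)
  linarith

lemma scale_le_half (a : ℕ → ℝ) (haf : ∀ k, a k = 1 / 8 * (1 / 2) ^ k) (j k : ℕ) (h : j < k) :
    a k ≤ a j / 2 := by
  rw [haf, haf]
  have : ((1 : ℝ) / 2) ^ k ≤ (1 / 2) ^ (j + 1) :=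
    pow_le_pow_of_le_one (by norm_num) (by norm_num) h
  rw [pow_succ] at this
  linarith

/-- The balls `B(c k, a k / 4)` are pairwise disjoint. -/
lemma centre_separation {X : Type*} [PseudoMetricSpace X] (a : ℕ → ℝ) (ha0 : ∀ k, 0 < a k)
    (ha : ∀ j k, j < k → a k ≤ a j / 2) (c : ℕ → X)
    (hc : ∀ j k, dist (c j) (c k) = |a j - a k|) (z : X) (j k : ℕ)
    (hj : dist z (c j) < a j / 4) (hk : dist z (c k) < a k / 4) : j = k := by
  wlog h : j < k generalizing j k
  · rcases eq_or_lt_of_le (not_lt.1 h) with h' | h'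
    · exact h'.symm
    · exact (this k j hk hj h').symm
  have h1 := dist_triangle_left (c j) (c k) z
  have h2 := ha j k h
  have h3 := le_abs_self (a j - a k)
  rw [hc] at h1
  linarith [ha0 j]

/-- A series dominated termwise by `g` except at one index at most, where it is bounded by `C`. -/
lemma tsum_le_add_tsum_of_subsingleton (f g : ℕ → ℝ≥0∞) (C : ℝ≥0∞) (P : ℕ → Prop)
    (hP : ∀ j k, P j → P k → j = k) (hC : ∀ k, f k ≤ C) (hg : ∀ k, ¬ P k → f k ≤ g k) :
    ∑' k, f k ≤ C + ∑' k, g k := by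
  by_cases h : ∃ k, P k
  · obtain ⟨k₀, hk₀⟩ := h
    calc ∑' k, f k ≤ ∑' k, ((if k = k₀ then C else 0) + g k) := by
          refine ENNReal.tsum_le_tsum fun k => ?_
          split_ifs with hk
          · exact (hC k).trans le_self_add
          · rw [zero_add]
            exact hg k fun hPk => hk (hP k k₀ hPk hk₀)
      _ = _ := by rw [ENNReal.tsum_add, tsum_ite_eq]
  · push Not at h
    exact (ENNReal.tsum_le_tsum fun k => hg k (h k)).trans le_add_self

lemma tsum_ofReal_geometric_ne_top (C q : ℝ) (hC : 0 ≤ C) (hq : 0 ≤ q) (hq1 : q < 1) :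
    ∑' k : ℕ, ENNReal.ofReal (C * q ^ k) ≠ ⊤ := by
  rw [← ENNReal.ofReal_tsum_of_nonneg (fun k => by positivity)
    ((summable_geometric_of_lt_one hq hq1).mul_left C)]
  exact ofReal_ne_top

/-! ### The sum of the bumps and its potential -/

section
variable (n : ℕ) (α : ℝ)

/-- `V^p` as an extended nonnegative function: the sum of `a_k^{-3α} χ_{B(c_k, a_k^3)}`. -/
noncomputable def bumpSum (a : ℕ → ℝ) (c : ℕ → Euc n) (y : Euc n) : ℝ≥0∞ :=
  ∑' k, (ball (c k) (a k ^ 3)).indicator (fun _ => ENNReal.ofReal ((a k ^ 3) ^ (-α))) y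

lemma measurable_bumpSum (a : ℕ → ℝ) (c : ℕ → Euc n) : Measurable (bumpSum n α a c) :=
  Measurable.tsum fun _ => measurable_const.indicator measurableSet_ball

lemma lintegral_bumpSum_mul (a : ℕ → ℝ) (c : ℕ → Euc n) (K : Euc n → ℝ≥0∞) (hK : Measurable K) :
    ∫⁻ y, bumpSum n α a c y * K y =
      ∑' k, ENNReal.ofReal ((a k ^ 3) ^ (-α)) * ∫⁻ y in ball (c k) (a k ^ 3), K y := by
  simp_rw [bumpSum, ← ENNReal.tsum_mul_right]
  rw [lintegral_tsum fun k => Measurable.aemeasurable (by fun_prop (disch := measurability))]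
  refine tsum_congr fun k => ?_
  rw [← lintegral_const_mul _ hK, ← lintegral_indicator measurableSet_ball]
  refine lintegral_congr fun y => ?_
  by_cases hy : y ∈ ball (c k) (a k ^ 3) <;> simp [hy]

lemma measurable_rieszKernel (x : Euc n) :
    Measurable fun y : Euc n => ENNReal.ofReal ((dist x y ^ ((n : ℝ) - α))⁻¹) := by
  fun_prop

/-- The potential of the bumps is bounded uniformly in `x`. At most one bump is centred within `a k / 4` of `x`, where
the potential is bounded uniformly in `k`; the potentials of the others are dominated by a
geometric series with ratio `4^{-(n-α)}`. -/
lemma exists_potential_bound (hn : 0 < n) (hα : 0 < α) (hαn : α < n) (a : ℕ → ℝ)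
    (haf : ∀ k, a k = 1 / 8 * (1 / 2) ^ k) (c : ℕ → Euc n)
    (hc : ∀ j k, dist (c j) (c k) = |a j - a k|) :
    ∃ M : ℝ≥0∞, M ≠ ⊤ ∧ ∀ x : Euc n,
      ∫⁻ y, bumpSum n α a c y * ENNReal.ofReal ((dist x y ^ ((n : ℝ) - α))⁻¹) ≤ M := by
  set s : ℝ := (n : ℝ) - α with hs
  have hs0 : 0 < s := by linarith
  set v := volume (ball (0 : Euc n) 1)
  have hv : v ≠ ⊤ := measure_ball_lt_top.ne
  have ha0 : ∀ k, 0 < a k := fun k => by rw [haf]; positivity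
  have ha8 := scale_le_eighth a haf
  have ha := scale_le_half a haf
  have hd : ∀ k, a k ^ 3 ≤ a k / 64 := fun k => by
    nlinarith [mul_le_mul (ha8 k) (ha8 k) (ha0 k).le (by norm_num), ha0 k]
  -- The far bump `k` contributes at most `(a k ^ 3) ^ (-α) * (a k / 8) ^ (-s) * (a k ^ 3) ^ n`.
  have hgeo : ∀ k, (a k ^ 3) ^ (-α) * (((a k / 8) ^ s)⁻¹ * (a k ^ 3) ^ n) =
      (8 ^ s * ((1 / 8) ^ 2) ^ s) * ((1 / 4) ^ s) ^ k := by
    intro k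
    have h0 := ha0 k
    have h1 : (a k ^ 3) ^ (-α) * (((a k / 8) ^ s)⁻¹ * (a k ^ 3) ^ n) = 8 ^ s * a k ^ (2 * s) := by
      rw [Real.div_rpow h0.le (by norm_num), inv_div, ← Real.rpow_natCast (a k ^ 3) n,
        ← Real.rpow_natCast (a k) 3, ← Real.rpow_mul h0.le, ← Real.rpow_mul h0.le, div_eq_mul_inv,
        ← Real.rpow_neg h0.le]
      rw [show a k ^ ((3 : ℕ) * -α) * (8 ^ s * a k ^ (-s) * a k ^ (((3 : ℕ) : ℝ) * n)) =
        8 ^ s * (a k ^ ((3 : ℕ) * -α) * a k ^ (-s) * a k ^ (((3 : ℕ) : ℝ) * n)) by ring,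
        ← Real.rpow_add h0, ← Real.rpow_add h0]
      congr 2
      push_cast
      rw [hs]; ring
    rw [h1, Real.rpow_mul h0.le, Real.rpow_two, haf, mul_pow,
      Real.mul_rpow (by norm_num) (by positivity), ← pow_mul, mul_comm k 2, pow_mul, Real.rpow_pow_comm (by norm_num), mul_assoc]
    norm_num
  refine ⟨ENNReal.ofReal (n / α + 1) * v +
    ∑' k : ℕ, ENNReal.ofReal ((8 ^ s * ((1 / 8) ^ 2) ^ s) * ((1 / 4) ^ s) ^ k) * v, ?_, ?_⟩
  · rw [ENNReal.tsum_mul_right]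
    refine add_ne_top.2 ⟨mul_ne_top ofReal_ne_top hv, mul_ne_top ?_ hv⟩
    exact tsum_ofReal_geometric_ne_top _ _ (by positivity) (by positivity)
      (Real.rpow_lt_one (by norm_num) (by norm_num) hs0)
  · intro x
    rw [lintegral_bumpSum_mul _ _ _ _ _ (measurable_rieszKernel n α x)]
    refine tsum_le_add_tsum_of_subsingleton _ _ _ (fun k => dist x (c k) < a k / 4)
      (fun j k hj hk => centre_separation a ha0 ha c hc x j k hj hk) (fun k => ?_) (fun k hk => ?_)
    · have h0 : 0 < a k ^ 3 := pow_pos (ha0 k) 3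
      refine (mul_le_mul_right (lintegral_rieszKernel_ball_le n hn α hα hαn x (c k) _ h0) _).trans ?_
      rw [← mul_assoc, ← ENNReal.ofReal_mul (by positivity), mul_left_comm, ← Real.rpow_add h0]
      simp [v]
    · have h0 : 0 < a k ^ 3 := pow_pos (ha0 k) 3
      refine (mul_le_mul_right (lintegral_rieszKernel_le_of_far n α hαn x (c k) _ (a k / 8) h0
        (by linarith [ha0 k]) _ subset_rfl fun y hy => ?_) _).trans ?_
      · rw [mem_ball] at hy
        linarith [dist_triangle x y (c k), hd k, ha0 k]
      · rw [← mul_assoc, ← ENNReal.ofReal_mul (by positivity), hgeo]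

/-- The total mass of the bumps is a geometric series with ratio `8^{-(n-α)}`. -/
lemma lintegral_bumpSum_ne_top (hαn : α < n) (hn : 0 < n) (a : ℕ → ℝ)
    (haf : ∀ k, a k = 1 / 8 * (1 / 2) ^ k) (c : ℕ → Euc n) :
    ∫⁻ y, bumpSum n α a c y ≠ ⊤ := by
  have : Nonempty (Fin n) := ⟨⟨0, hn⟩⟩
  have h := lintegral_bumpSum_mul n α a c (fun _ => 1) measurable_const
  simp only [mul_one, lintegral_const, Measure.restrict_apply_univ, one_mul] at h
  have ha0 : ∀ k, 0 < a k := fun k => by rw [haf]; positivity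
  have hk : ∀ k, ENNReal.ofReal ((a k ^ 3) ^ (-α)) * volume (ball (c k) (a k ^ 3)) =
      ENNReal.ofReal (((1 / 8) ^ 3) ^ ((n : ℝ) - α) * ((1 / 8) ^ ((n : ℝ) - α)) ^ k) *
        volume (ball (0 : Euc n) 1) := by
    intro k
    have h0 : 0 < a k ^ 3 := pow_pos (ha0 k) 3
    rw [Measure.addHaar_ball_of_pos volume _ h0, ← mul_assoc, ← ENNReal.ofReal_mul (by positivity)]
    congr 2
    rw [finrank_euclideanSpace_fin, ← Real.rpow_natCast _ n, ← Real.rpow_add h0, haf, mul_pow,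
      ← pow_mul, mul_comm k 3, pow_mul, neg_add_eq_sub, Real.mul_rpow (by positivity) (by positivity),
      Real.rpow_pow_comm (by norm_num)]
    norm_num
  simp_rw [h, hk, ENNReal.tsum_mul_right]
  refine mul_ne_top ?_ measure_ball_lt_top.ne
  exact tsum_ofReal_geometric_ne_top _ _ (by positivity) (by positivity)
      (Real.rpow_lt_one (by norm_num) (by norm_num) (by linarith))

end

/-- With `x_k = (2^{-k},0,…,0)` and `V_k = 8^{αk} χ_{B(x_k,8^{-k})}` (k ≥ 3),
the function `V = (Σ_{k≥3} V_k)^{1/p}` is in `L^p_loc(ℝ^n)`, satisfies `η_{p,α}V(r) < ∞` for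
all `r > 0` (so `V ∈ S̃_{p,α}`) but `η_{p,α}V(r)^p ≥ |B(0,1)|/α` for all `r > 0`, and
`V ∉ S_{p,α}(ℝ^n)`; hence the inclusion `S_{p,α} ⊆ S̃_{p,α}` is proper. -/
theorem bounded_stummel_class_proper (n : ℕ) (hn : 0 < n) (p α : ℝ)
    (hp : 1 ≤ p) (hα : 0 < α) (hαn : α < n)
    (x : ℕ → Euc n)
    (hx : x = fun k : ℕ => EuclideanSpace.single (⟨0, hn⟩ : Fin n)
      ((2 : ℝ) ^ (-((k : ℝ) + 3))))
    (V : Euc n → ℝ)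
    (hV : V = fun y =>
      (∑' k : ℕ, Set.indicator (ball (x k) ((8 : ℝ) ^ (-((k : ℝ) + 3))))
        (fun _ => (8 : ℝ) ^ (α * ((k : ℝ) + 3))) y) ^ (1 / p)) :
    MemLocLp n p V ∧
    (∀ r > 0, stummelModA n p α V r < ⊤) ∧
    (∀ r > 0, volume (ball (0 : Euc n) 1) / ENNReal.ofReal α ≤ stummelModA n p α V r ^ p) ∧
    ¬ MemStummelA n p α V := by
  have hp0 : 0 < p := by linarith
  set a : ℕ → ℝ := fun k => (2 : ℝ) ^ (-((k : ℝ) + 3)) with ha_def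
  have haf : ∀ k, a k = 1 / 8 * (1 / 2) ^ k := fun k => by
    rw [ha_def]
    simp only
    rw [Real.rpow_neg (by norm_num), Real.rpow_add (by norm_num), Real.rpow_natCast]
    rw [one_div_pow]
    norm_num [mul_comm]
  have ha0 : ∀ k, 0 < a k := fun k => by positivity
  have hrad : ∀ k : ℕ, (8 : ℝ) ^ (-((k : ℝ) + 3)) = a k ^ 3 := fun k => by
    rw [ha_def]
    simp only
    rw [Real.rpow_pow_comm (by norm_num)]
    norm_num
  have hht : ∀ k : ℕ, (8 : ℝ) ^ (α * ((k : ℝ) + 3)) = (a k ^ 3) ^ (-α) := fun k => by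
    rw [← hrad, ← Real.rpow_mul (by norm_num)]
    congr 1
    ring
  have hc : ∀ j k, dist (x j) (x k) = |a j - a k| := fun j k => by
    simp only [hx, PiLp.dist_single_same, Real.dist_eq, ha_def]
  have hdecay := scale_le_half a haf
  have hsmall : ∀ k, a k ^ 3 ≤ a k / 4 := fun k => by
    have h8 := scale_le_eighth a haf k
    nlinarith [mul_le_mul h8 h8 (ha0 k).le (by norm_num), ha0 k]
  have hsupp : ∀ (y : Euc n) j k, y ∈ ball (x j) (a j ^ 3) → y ∈ ball (x k) (a k ^ 3) → j = k :=
    fun y j k hj hk => centre_separation a ha0 hdecay x hc y j k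
      ((mem_ball.1 hj).trans_le (hsmall j)) ((mem_ball.1 hk).trans_le (hsmall k))
  -- The balls are disjoint, so the real series defining `V` has at most one nonzero term.
  have hVp : ∀ y, ENNReal.ofReal (|V y| ^ p) = bumpSum n α a x y := by
    intro y
    simp only [hV, hrad, hht]
    have hnn : ∀ k : ℕ, 0 ≤ (ball (x k) (a k ^ 3)).indicator (fun _ => (a k ^ 3) ^ (-α)) y :=
      fun k => indicator_apply_nonneg fun _ => by have := ha0 k; positivity
    have hsum : Summable fun k : ℕ =>
        (ball (x k) (a k ^ 3)).indicator (fun _ => (a k ^ 3) ^ (-α)) y := by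
      refine summable_of_hasFiniteSupport (Set.Subsingleton.finite fun j hj k hk => ?_)
      exact hsupp y j k (mem_of_indicator_ne_zero hj) (mem_of_indicator_ne_zero hk)
    rw [abs_of_nonneg (Real.rpow_nonneg (tsum_nonneg hnn) _), ← Real.rpow_mul (tsum_nonneg hnn),
      one_div_mul_cancel hp0.ne', Real.rpow_one, ENNReal.ofReal_tsum_of_nonneg hnn hsum, bumpSum]
    refine tsum_congr fun k => ?_
    by_cases hy : y ∈ ball (x k) (a k ^ 3) <;> simp [hy]
  have hVK : ∀ z y, ENNReal.ofReal (|V y| ^ p / dist z y ^ ((n : ℝ) - α)) =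
      bumpSum n α a x y * ENNReal.ofReal ((dist z y ^ ((n : ℝ) - α))⁻¹) := fun z y => by
    rw [div_eq_mul_inv, ENNReal.ofReal_mul (by positivity), hVp]
  have hloc : MemLocLp n p V := by
    have h := integrable_toReal_of_lintegral_ne_top (measurable_bumpSum n α a x).aemeasurable
      (lintegral_bumpSum_ne_top n α hαn hn a haf x)
    refine Integrable.locallyIntegrable (h.congr (.of_forall fun y => ?_))
    simp only
    rw [← hVp, ENNReal.toReal_ofReal (by positivity)]
  have hfin : ∀ r > 0, stummelModA n p α V r < ⊤ := by
    intro r _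
    obtain ⟨M, hM, hMb⟩ := exists_potential_bound n α hn hα hαn a haf x hc
    refine lt_of_le_of_lt (iSup_le fun z => ?_)
      (ENNReal.rpow_lt_top_of_nonneg (one_div_nonneg.2 hp0.le) hM)
    refine ENNReal.rpow_le_rpow ?_ (one_div_nonneg.2 hp0.le)
    simp_rw [hVK]
    exact (setLIntegral_le_lintegral _ _).trans (hMb z)
  have hlow : ∀ r > 0,
      volume (ball (0 : Euc n) 1) / ENNReal.ofReal α ≤ stummelModA n p α V r ^ p := by
    intro r hr
    -- A bump `k` contained in the ball of radius `r` about its own centre.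
    obtain ⟨k, hk⟩ : ∃ k, a k ^ 3 ≤ r := by
      obtain ⟨k, hk⟩ := exists_pow_lt_of_lt_one hr (by norm_num : (1 : ℝ) / 2 < 1)
      refine ⟨k, ?_⟩
      have := haf k
      linarith [hsmall k, ha0 k]
    have h0 : 0 < a k ^ 3 := pow_pos (ha0 k) 3
    have h1n : (1 : ℝ) ≤ n := by exact_mod_cast hn
    have key : volume (ball (0 : Euc n) 1) / ENNReal.ofReal α ≤
        ∫⁻ y in ball (x k) r, ENNReal.ofReal (|V y| ^ p / dist (x k) y ^ ((n : ℝ) - α)) := by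
      calc volume (ball (0 : Euc n) 1) / ENNReal.ofReal α
          ≤ ENNReal.ofReal ((a k ^ 3) ^ (-α)) *
            (ENNReal.ofReal (n / α * (a k ^ 3) ^ α) * volume (ball (0 : Euc n) 1)) := by
            rw [← mul_assoc, ← ENNReal.ofReal_mul (by positivity), mul_left_comm,
              ← Real.rpow_add h0, neg_add_cancel, Real.rpow_zero, mul_one, div_eq_mul_inv,
              mul_comm, ← ENNReal.ofReal_inv_of_pos hα]
            gcongr
            rw [inv_eq_one_div]
            gcongr
        _ = ∫⁻ y in ball (x k) (a k ^ 3), ENNReal.ofReal ((a k ^ 3) ^ (-α)) *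
              ENNReal.ofReal ((dist (x k) y ^ ((n : ℝ) - α))⁻¹) := by
            rw [lintegral_const_mul _ (measurable_rieszKernel n α _),
              lintegral_rieszKernel_ball n hn α hα _ _ h0]
        _ ≤ ∫⁻ y in ball (x k) (a k ^ 3),
              ENNReal.ofReal (|V y| ^ p / dist (x k) y ^ ((n : ℝ) - α)) := by
            refine setLIntegral_mono' measurableSet_ball fun y hy => ?_
            rw [hVK]
            gcongr
            refine le_trans ?_ (ENNReal.le_tsum k)
            rw [indicator_of_mem hy]
        _ ≤ _ := lintegral_mono_set (ball_subset_ball hk)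
    refine key.trans ?_
    rw [← ENNReal.rpow_le_rpow_iff (z := 1 / p) (by positivity), ← ENNReal.rpow_mul,
      mul_one_div_cancel hp0.ne', ENNReal.rpow_one]
    exact le_iSup (fun z => (∫⁻ y in ball z r,
      ENNReal.ofReal (|V y| ^ p / dist z y ^ ((n : ℝ) - α))) ^ (1 / p)) (x k)
  refine ⟨hloc, hfin, hlow, fun h => ?_⟩
  have hlim : Tendsto (fun r => stummelModA n p α V r ^ p) (nhdsWithin 0 (Ioi 0)) (nhds 0) := by
    simpa [ENNReal.zero_rpow_of_pos hp0] using h.2.2.ennrpow_const p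
  have hle := ge_of_tendsto hlim (eventually_nhdsWithin_of_forall fun r hr => hlow r hr)
  have hpos : 0 < volume (ball (0 : Euc n) 1) / ENNReal.ofReal α :=
    ENNReal.div_pos (measure_ball_pos volume 0 one_pos).ne' ofReal_ne_top
  exact absurd hle hpos.not_ge
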